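/- Let (X'_n)_{n≥1} be Bochner-integrable 𝔹-valued random variables with E‖X'_n‖^p < ∞, adapted to a filtration (𝒢_n)_{n≥0}, with E[X'_n | 𝒢_{n−1}] = μ almost surely and E[‖X'_n − μ‖^p | 𝒢_{n−1}] ≤ v almost surely for all n ≥ 1. Let Ẑ be a 𝒢₀-measurable 𝔹-valued random variable and r : (0,1] → ℝ_{≥0} a function such that P(‖μ − Ẑ‖ ≥ r(δ')) ≤ δ' for every δ' ∈ (0,1]. Fix δ₁, δ₂ ∈ (0,1) with δ₁ + δ₂ ≤ 1, fix ρ > 0 and λ > 0, and define μ̂_n := (1/n)·Σ_{m=1}^n ( Trunc(λ(X'_m − Ẑ))·(X'_m − Ẑ) + Ẑ ). Then with probability at least 1 − δ₁ − δ₂, simultaneously for all n ≥ 1: ‖μ̂_n − μ‖ ≤ λ^{p−1}·(ρ·β²·𝔠_p(ρ) + K_p·2^{p−1})·(v + r(δ₂)^p) + log(2/δ₁)/(λ·ρ·n). -/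

import Mathlib

open MeasureTheory
open scoped Classical

/-- `truncB x = min(1, ‖x‖)/‖x‖` for `x ≠ 0`, and `truncB 0 = 1`; so `truncB x • x` is the
projection of `x` onto the closed unit ball. -/
noncomputable def truncB {B : Type*} [NormedAddCommGroup B] (x : B) : ℝ :=
  if x = 0 then 1 else min 1 ‖x‖ / ‖x‖

/-- `K_p = (1/p) ((p-1)/p)^{p-1}`. -/
noncomputable def Kp (p : ℝ) : ℝ := (1 / p) * ((p - 1) / p) ^ (p - 1)

/-- `𝔠_p(ρ) = 2^{p+1} (e^{2ρ} - 2ρ - 1)/(2ρ)²`. -/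
noncomputable def frakC (p ρ : ℝ) : ℝ :=
  2 ^ (p + 1) * (Real.exp (2 * ρ) - 2 * ρ - 1) / (2 * ρ) ^ 2

/-!
After rescaling and truncation, `Yₙ = ballProj (λ (X'ₙ - Ẑ))` has norm at most `1`. Smoothness of
the norm gives a quadratic Taylor bound for `‖·‖²` along the duality map, and convexity of
`t ↦ cosh √t` on `[0, ∞)` lifts it to a Taylor bound for `cosh ‖·‖`. Hence `cosh ‖·‖` of the
martingale `ρ ∑ (Yₙ - E[Yₙ | 𝒢ₙ₋₁])`, discounted by a fixed factor per step, is a nonnegative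
supermartingale, and Ville's inequality bounds it uniformly in `n`; the boundedness of `Yₙ` is
what makes the discount controllable by a `p`-th moment. The truncation bias is at most `K_p`
times the same moment, because `‖x‖ - 1 ≤ K_p ‖x‖ ^ p`. The moment bound needs `‖μ - Ẑ‖ ≤ r(δ₂)`
everywhere: replace `Ẑ` by `μ` where this fails, an event of probability at most `δ₂`.
-/

/-! ### Real-variable inequalities -/

theorem hasSum_cosh_sqrt {t : ℝ} (ht : 0 ≤ t) :
    HasSum (fun n : ℕ => t ^ n / (2 * n).factorial) (Real.cosh √t) := by
  simpa only [pow_mul, Real.sq_sqrt ht] using Real.hasSum_cosh √t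

theorem convexOn_cosh_sqrt : ConvexOn ℝ (Set.Ici 0) fun t => Real.cosh √t := by
  refine ⟨convex_Ici 0, fun s hs t ht a b ha hb hab => ?_⟩
  have hst := hasSum_cosh_sqrt (convex_Ici (0 : ℝ) hs ht ha hb hab)
  have hsum := ((hasSum_cosh_sqrt hs).mul_left a).add ((hasSum_cosh_sqrt ht).mul_left b)
  refine hasSum_le (fun n => ?_) hst hsum
  calc (a • s + b • t) ^ n / (2 * n).factorial
      ≤ (a • s ^ n + b • t ^ n) / (2 * n).factorial := by
        gcongr
        exact (convexOn_pow n).2 hs ht ha hb hab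
    _ = a * (s ^ n / (2 * n).factorial) + b * (t ^ n / (2 * n).factorial) := by
        simp only [smul_eq_mul]
        ring

-- `b²` is the convex combination of `(a + c)²` and `(a - c)²` with weights `(1 ± θ) / 2`.
theorem cosh_le_of_sq_eq {a b c θ : ℝ} (hθ : |θ| ≤ 1)
    (h : b ^ 2 = a ^ 2 + c ^ 2 + 2 * a * c * θ) :
    Real.cosh b ≤ Real.cosh a * Real.cosh c + θ * (Real.sinh a * Real.sinh c) := by
  obtain ⟨hθ₁, hθ₂⟩ := abs_le.1 hθ
  have hconv := convexOn_cosh_sqrt.2 (sq_nonneg (a + c)) (sq_nonneg (a - c))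
    (show 0 ≤ (1 + θ) / 2 by linarith) (show 0 ≤ (1 - θ) / 2 by linarith) (by ring)
  simp only [smul_eq_mul] at hconv
  rw [show (1 + θ) / 2 * (a + c) ^ 2 + (1 - θ) / 2 * (a - c) ^ 2 = b ^ 2 by rw [h]; ring] at hconv
  simp only [Real.sqrt_sq_eq_abs, Real.cosh_abs, Real.cosh_add, Real.cosh_sub] at hconv
  linarith

-- The triangle inequalities make `a`, `c`, `b` the sides of a plane triangle; `-θ` is the cosine
-- of the angle between the first two.
theorem exists_abs_le_one_sq_eq {a b c : ℝ} (ha : 0 ≤ a) (hb : 0 ≤ b) (hc : 0 ≤ c)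
    (hab : a ≤ b + c) (hac : c ≤ a + b) (hbc : b ≤ a + c) :
    ∃ θ : ℝ, |θ| ≤ 1 ∧ b ^ 2 = a ^ 2 + c ^ 2 + 2 * a * c * θ := by
  rcases (mul_nonneg ha hc).eq_or_lt' with h0 | hpos
  · refine ⟨0, by simp, ?_⟩
    rcases mul_eq_zero.1 h0 with rfl | rfl
    · rw [show b = c by linarith]; ring
    · rw [show b = a by linarith]; ring
  · refine ⟨(b ^ 2 - a ^ 2 - c ^ 2) / (2 * (a * c)), ?_, ?_⟩
    · rw [abs_le, le_div_iff₀ (by positivity), div_le_one (by positivity)]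
      exact ⟨by nlinarith, by nlinarith⟩
    · rw [mul_assoc 2 a c, mul_div_cancel₀ _ (by positivity)]
      ring

theorem sinh_le_self_mul_cosh {a : ℝ} (ha : 0 ≤ a) : Real.sinh a ≤ a * Real.cosh a := by
  refine hasSum_le (fun n => ?_) (Real.hasSum_sinh a) ((Real.hasSum_cosh a).mul_left a)
  rw [← mul_div_assoc, ← pow_succ']
  gcongr
  exact Nat.le_succ _

theorem cosh_le_cosh_add_mul_exp_sub {a b c j β : ℝ} (ha : 0 ≤ a) (hb : 0 ≤ b) (hc : 0 ≤ c)
    (hab : a ≤ b + c) (hac : c ≤ a + b) (hbc : b ≤ a + c) (hβ : 1 ≤ β ^ 2)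
    (h : b ^ 2 ≤ a ^ 2 + 2 * j + β ^ 2 * c ^ 2) :
    Real.cosh b ≤ Real.cosh a + Real.sinh a / a * j
      + Real.cosh a * (β ^ 2 * (Real.exp c - 1 - c)) := by
  obtain ⟨θ, hθ, hbθ⟩ := exists_abs_le_one_sq_eq ha hb hc hab hac hbc
  set σ := Real.sinh a / a
  have hσ : 0 ≤ σ := div_nonneg (Real.sinh_nonneg_iff.2 ha) ha
  have hσa : σ * a = Real.sinh a :=
    div_mul_cancel_of_imp (by rintro rfl; exact Real.sinh_zero)
  have hσcosh : σ ≤ Real.cosh a :=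
    div_le_of_le_mul₀ ha (Real.cosh_pos a).le (mul_comm a _ ▸ sinh_le_self_mul_cosh ha)
  have : 0 ≤ β ^ 2 - 1 := sub_nonneg.2 hβ
  have hj : Real.sinh a * c * θ - Real.cosh a * ((β ^ 2 - 1) * (c ^ 2 / 2)) ≤ σ * j :=
    calc Real.sinh a * c * θ - Real.cosh a * ((β ^ 2 - 1) * (c ^ 2 / 2))
        ≤ σ * a * c * θ - σ * ((β ^ 2 - 1) * (c ^ 2 / 2)) := by rw [hσa]; gcongr
      _ = σ * (a * c * θ - (β ^ 2 - 1) * (c ^ 2 / 2)) := by ring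
      _ ≤ σ * j := by gcongr; linarith
  have hquad : (β ^ 2 - 1) * (c ^ 2 / 2) ≤ (β ^ 2 - 1) * (Real.exp c - 1 - c) := by
    gcongr
    linarith [Real.quadratic_le_exp_of_nonneg hc]
  have hθsinh : θ * Real.sinh a ≤ Real.cosh a :=
    (mul_le_of_le_one_left (Real.sinh_nonneg_iff.2 ha) (abs_le.1 hθ).2).trans
      (Real.sinh_lt_cosh a).le
  calc Real.cosh b ≤ Real.cosh a * Real.cosh c + θ * (Real.sinh a * Real.sinh c) :=
        cosh_le_of_sq_eq hθ hbθ
    _ = Real.cosh a * Real.cosh c + Real.sinh a * c * θ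
          + θ * Real.sinh a * (Real.sinh c - c) := by ring
    _ ≤ Real.cosh a * Real.cosh c + (σ * j + Real.cosh a * ((β ^ 2 - 1) * (Real.exp c - 1 - c)))
          + Real.cosh a * (Real.sinh c - c) := by
        have := mul_le_mul_of_nonneg_left hquad (Real.cosh_pos a).le
        have := sub_nonneg.2 (Real.self_le_sinh_iff.2 hc)
        gcongr
        linarith
    _ = Real.cosh a + σ * j + Real.cosh a * (β ^ 2 * (Real.exp c - 1 - c)) := by
        rw [← Real.cosh_add_sinh c]
        ring

theorem hasSum_exp_sub_one_sub (x : ℝ) :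
    HasSum (fun n : ℕ => x ^ (n + 2) / (n + 2).factorial) (Real.exp x - 1 - x) := by
  rw [sub_sub]
  simpa [Finset.sum_range_succ, ← Real.exp_eq_exp_ℝ] using
    (hasSum_nat_add_iff' 2).2 (NormedSpace.expSeries_div_hasSum_exp x)

theorem exp_mul_sub_one_sub_le {s a p : ℝ} (hs₀ : 0 ≤ s) (hs₁ : s ≤ 1) (ha : 0 ≤ a)
    (hp₀ : 0 ≤ p) (hp : p ≤ 2) :
    Real.exp (s * a) - 1 - s * a ≤ s ^ p * (Real.exp a - 1 - a) := by
  refine hasSum_le (fun n => ?_) (hasSum_exp_sub_one_sub (s * a))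
    ((hasSum_exp_sub_one_sub a).mul_left (s ^ p))
  have hpow : s ^ (n + 2) ≤ s ^ p := by
    rw [← Real.rpow_natCast]
    refine Real.rpow_le_rpow_of_exponent_ge' hs₀ hs₁ hp₀ ?_
    push_cast
    linarith
  rw [mul_pow, mul_div_assoc]
  gcongr

theorem Kp_nonneg {p : ℝ} (hp : 1 ≤ p) : 0 ≤ Kp p :=
  have : 0 ≤ p - 1 := sub_nonneg.2 hp
  mul_nonneg (by positivity) (by positivity)

-- Bernoulli's inequality for `(q t) ^ p` with `q = (p - 1) / p`: the tangent to `t ↦ Kp p * t ^ p`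
-- with slope `1` is exactly `t - 1`.
theorem sub_one_le_Kp_mul_rpow {p t : ℝ} (hp : 1 ≤ p) (ht : 0 ≤ t) : t - 1 ≤ Kp p * t ^ p := by
  rcases hp.eq_or_lt with rfl | hp1
  · simp [Kp]
  have hp0 : 0 < p := by linarith
  set q := (p - 1) / p with hq
  have hpq : p * q = p - 1 := mul_div_cancel₀ _ hp0.ne'
  have hq0 : 0 < q := div_pos (by linarith) hp0
  have hKp : (p - 1) * Kp p = q ^ p := by
    rw [Kp, ← hq, Real.rpow_sub_one hq0.ne', hq]
    field_simp
  have hbern : 1 + p * (q * t - 1) ≤ (q * t) ^ p := by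
    have := mul_nonneg hq0.le ht
    simpa using one_add_mul_self_le_rpow_one_add (s := q * t - 1) (by linarith) hp
  rw [Real.mul_rpow hq0.le ht, ← hKp, mul_assoc, mul_sub, ← mul_assoc, hpq] at hbern
  exact le_of_mul_le_mul_left (by linarith) (sub_pos.2 hp1)

theorem add_rpow_le_two_rpow_mul {a b p : ℝ} (ha : 0 ≤ a) (hb : 0 ≤ b) (hp : 1 ≤ p) :
    (a + b) ^ p ≤ 2 ^ (p - 1) * (a ^ p + b ^ p) := by
  lift a to NNReal using ha
  lift b to NNReal using hb
  exact_mod_cast NNReal.rpow_add_le_mul_rpow_add_rpow a b hp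

theorem mul_frakC {ρ : ℝ} (hρ : ρ ≠ 0) (p : ℝ) :
    ρ * frakC p ρ = 2 ^ (p - 1) * ((Real.exp (2 * ρ) - 1 - 2 * ρ) / ρ) := by
  have hpow : (2 : ℝ) ^ (p + 1) = 2 ^ (p - 1) * 4 := by
    rw [show p + 1 = p - 1 + 2 by ring, Real.rpow_add two_pos]
    norm_num
  rw [frakC, hpow]
  field_simp
  ring

/-! ### Smooth norms -/

section SmoothNorm

variable {B : Type*} [NormedAddCommGroup B] {β : ℝ}

/-- `(2, β)`-smoothness of the norm of `B`. -/
def TwoSmoothNorm (B : Type*) [NormedAddCommGroup B] (β : ℝ) : Prop :=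
  ∀ x y : B, ‖x + y‖ ^ 2 + ‖x - y‖ ^ 2 ≤ 2 * ‖x‖ ^ 2 + 2 * β ^ 2 * ‖y‖ ^ 2

theorem TwoSmoothNorm.one_le_sq (h : TwoSmoothNorm B β) {y : B} (hy : y ≠ 0) : 1 ≤ β ^ 2 := by
  have h0 := h 0 y
  simp only [zero_add, zero_sub, norm_neg, norm_zero] at h0
  have : 0 < ‖y‖ ^ 2 := by positivity
  nlinarith

variable [NormedSpace ℝ B]

/-- A selection of the normalized duality map: a functional `f` of norm `‖x‖` with
`f x = ‖x‖ ^ 2`. For a smooth norm, it is the derivative of `‖·‖ ^ 2 / 2` at `x`. -/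
noncomputable def dualityMap (x : B) : StrongDual ℝ B :=
  ‖x‖ • (exists_dual_vector'' ℝ x).choose

/-- The derivative of `cosh ‖·‖` at `x` for a smooth norm, `0` at `x = 0` by division by zero. -/
noncomputable def coshNormDeriv (x : B) : StrongDual ℝ B :=
  (Real.sinh ‖x‖ / ‖x‖) • dualityMap x

theorem dualityMap_apply_self (x : B) : dualityMap x x = ‖x‖ ^ 2 := by
  have h : (exists_dual_vector'' ℝ x).choose x = ‖x‖ := (exists_dual_vector'' ℝ x).choose_spec.2
  rw [dualityMap, smul_apply, h, smul_eq_mul, sq]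

theorem norm_dualityMap_le (x : B) : ‖dualityMap x‖ ≤ ‖x‖ := by
  rw [dualityMap, norm_smul, norm_norm]
  exact mul_le_of_le_one_right (norm_nonneg x) (exists_dual_vector'' ℝ x).choose_spec.1

theorem dualityMap_apply_le (x y : B) : dualityMap x y ≤ ‖x‖ * ‖y‖ :=
  (le_abs_self _).trans ((dualityMap x).le_of_opNorm_le (norm_dualityMap_le x) y)

theorem sq_norm_add_dualityMap_le (x y : B) : ‖x‖ ^ 2 + 2 * dualityMap x y ≤ ‖x + y‖ ^ 2 := by
  have h : ‖x‖ ^ 2 + dualityMap x y ≤ ‖x‖ * ‖x + y‖ := by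
    rw [← dualityMap_apply_self, ← map_add]
    exact dualityMap_apply_le x (x + y)
  linarith [two_mul_le_add_sq ‖x‖ ‖x + y‖]

theorem norm_coshNormDeriv_le (x : B) : ‖coshNormDeriv x‖ ≤ Real.sinh ‖x‖ := by
  have hsinh : 0 ≤ Real.sinh ‖x‖ / ‖x‖ :=
    div_nonneg (Real.sinh_nonneg_iff.2 (norm_nonneg x)) (norm_nonneg x)
  calc ‖coshNormDeriv x‖ = Real.sinh ‖x‖ / ‖x‖ * ‖dualityMap x‖ := by
        rw [coshNormDeriv, norm_smul, Real.norm_of_nonneg hsinh]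
    _ ≤ Real.sinh ‖x‖ / ‖x‖ * ‖x‖ := by
        gcongr
        exact norm_dualityMap_le x
    _ = Real.sinh ‖x‖ := div_mul_cancel_of_imp fun h => by rw [h, Real.sinh_zero]

namespace TwoSmoothNorm

-- Smoothness at `x + y / 2`, `y / 2` reduces the bound for `y` to the one for `y / 2`, and halves
-- the excess over the sharp constant.
theorem sq_norm_add_le_of_pow (h : TwoSmoothNorm B β) (x y : B) (n : ℕ) :
    ‖x + y‖ ^ 2 ≤ ‖x‖ ^ 2 + 2 * dualityMap x y + (1 + (1 / 2) ^ n) * (β ^ 2 * ‖y‖ ^ 2) := by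
  induction n generalizing y with
  | zero =>
    have hsub := sq_norm_add_dualityMap_le x (-y)
    rw [map_neg, ← sub_eq_add_neg] at hsub
    linarith [h x y]
  | succ n ih =>
    set z := (1 / 2 : ℝ) • y
    have hz : x + z + z = x + y := by module
    have hnorm : ‖z‖ ^ 2 = ‖y‖ ^ 2 / 4 := by
      rw [norm_smul, Real.norm_of_nonneg (by norm_num)]
      ring
    have hdual : dualityMap x z = dualityMap x y / 2 := by
      rw [map_smul, smul_eq_mul]
      ring
    have hsmooth := h (x + z) z
    have hz_bound := ih z
    rw [hz, add_sub_cancel_right, hnorm] at hsmooth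
    rw [hnorm, hdual] at hz_bound
    rw [pow_succ (1 / 2 : ℝ) n]
    linarith

theorem sq_norm_add_le (h : TwoSmoothNorm B β) (x y : B) :
    ‖x + y‖ ^ 2 ≤ ‖x‖ ^ 2 + 2 * dualityMap x y + β ^ 2 * ‖y‖ ^ 2 := by
  have hlim : Filter.Tendsto
      (fun n : ℕ => ‖x‖ ^ 2 + 2 * dualityMap x y + (1 + (1 / 2 : ℝ) ^ n) * (β ^ 2 * ‖y‖ ^ 2))
      Filter.atTop (nhds (‖x‖ ^ 2 + 2 * dualityMap x y + (1 + 0) * (β ^ 2 * ‖y‖ ^ 2))) := by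
    have := tendsto_pow_atTop_nhds_zero_of_lt_one (r := (1 / 2 : ℝ)) (by norm_num) (by norm_num)
    exact ((this.const_add 1).mul_const _).const_add _
  rw [add_zero, one_mul] at hlim
  exact ge_of_tendsto' hlim (h.sq_norm_add_le_of_pow x y)

theorem cosh_norm_add_le (h : TwoSmoothNorm B β) (x y : B) :
    Real.cosh ‖x + y‖ ≤ Real.cosh ‖x‖ + coshNormDeriv x y
      + Real.cosh ‖x‖ * (β ^ 2 * (Real.exp ‖y‖ - 1 - ‖y‖)) := by
  rcases eq_or_ne y 0 with rfl | hy
  · simp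
  have hxy : ‖x‖ ≤ ‖x + y‖ + ‖y‖ := by simpa using norm_sub_le (x + y) y
  have hyx : ‖y‖ ≤ ‖x‖ + ‖x + y‖ := by simpa [add_comm ‖x‖] using norm_sub_le (x + y) x
  rw [coshNormDeriv, smul_apply, smul_eq_mul]
  exact cosh_le_cosh_add_mul_exp_sub (norm_nonneg _) (norm_nonneg _) (norm_nonneg _) hxy hyx
    (norm_add_le x y) (h.one_le_sq hy) (h.sq_norm_add_le x y)

theorem dualityMap_sub_apply_le (h : TwoSmoothNorm B β) (x z w : B) :
    (dualityMap z - dualityMap x) w ≤ β ^ 2 * (‖z - x‖ ^ 2 + ‖w‖ ^ 2) := by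
  have hz := sq_norm_add_dualityMap_le z w
  have hx := sq_norm_add_dualityMap_le x (z - x)
  have hxw := h.sq_norm_add_le x (z - x + w)
  rw [add_sub_cancel] at hx
  rw [← add_assoc, add_sub_cancel, map_add] at hxw
  have hsq : ‖z - x + w‖ ^ 2 ≤ 2 * (‖z - x‖ ^ 2 + ‖w‖ ^ 2) :=
    (pow_le_pow_left₀ (norm_nonneg _) (norm_add_le _ _) 2).trans add_sq_le
  have := mul_le_mul_of_nonneg_left hsq (sq_nonneg β)
  rw [sub_apply]
  linarith

theorem norm_dualityMap_sub_le (h : TwoSmoothNorm B β) (x z : B) :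
    ‖dualityMap z - dualityMap x‖ ≤ 2 * β ^ 2 * ‖z - x‖ := by
  rcases eq_or_ne z x with rfl | hne
  · simp
  have hd : 0 < ‖z - x‖ := norm_sub_pos_iff.2 hne
  have hunit : ∀ w : B, ‖w‖ = 1 → (dualityMap z - dualityMap x) w ≤ 2 * β ^ 2 * ‖z - x‖ := by
    intro w hw
    have := h.dualityMap_sub_apply_le x z (‖z - x‖ • w)
    rw [map_smul, norm_smul, norm_norm, hw, mul_one, smul_eq_mul] at this
    exact le_of_mul_le_mul_left (by linarith) hd
  refine ContinuousLinearMap.opNorm_le_of_unit_norm (by positivity) fun w hw => ?_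
  refine abs_le'.2 ⟨hunit w hw, ?_⟩
  rw [← map_neg]
  exact hunit (-w) (by rwa [norm_neg])

theorem continuous_dualityMap (h : TwoSmoothNorm B β) :
    Continuous (dualityMap : B → StrongDual ℝ B) := by
  refine LipschitzWith.continuous (K := (2 * β ^ 2).toNNReal) (.of_dist_le_mul fun z x => ?_)
  rw [Real.coe_toNNReal _ (by positivity), dist_eq_norm, dist_eq_norm]
  exact h.norm_dualityMap_sub_le x z

theorem stronglyMeasurable_coshNormDeriv_comp (h : TwoSmoothNorm B β) {α : Type*}
    {_ : MeasurableSpace α} {S : α → B} (hS : StronglyMeasurable S) :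
    StronglyMeasurable fun ω => coshNormDeriv (S ω) :=
  (hS.norm.measurable.sinh.div hS.norm.measurable).stronglyMeasurable.smul
    (h.continuous_dualityMap.comp_stronglyMeasurable hS)

end TwoSmoothNorm

end SmoothNorm

/-! ### Time-uniform deviation bounds -/

section Ville

variable {Ω : Type*} {mΩ : MeasurableSpace Ω} {P : Measure Ω} [IsFiniteMeasure P]
  {𝒢 : Filtration ℕ mΩ} {M : ℕ → Ω → ℝ} {c : ℝ}

theorem mul_measureReal_exists_ge_le (hM : Supermartingale M 𝒢 P) (hM₀ : ∀ n ω, 0 ≤ M n ω)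
    (hc : 0 ≤ c) (n : ℕ) : c * P.real {ω | ∃ k ≤ n, c ≤ M k ω} ≤ ∫ ω, M 0 ω ∂P := by
  set τ : Ω → ℕ∞ := fun ω => (hittingBtwn M (Set.Ici c) 0 n ω : ℕ)
  have hτ : IsStoppingTime 𝒢 τ :=
    hM.stronglyAdapted.adapted.isStoppingTime_hittingBtwn measurableSet_Ici
  have hτn : ∀ ω, τ ω ≤ n := fun ω => Nat.cast_le.2 (hittingBtwn_le ω)
  have hmono := hM.neg.expected_stoppedValue_mono (isStoppingTime_const 𝒢 0) hτ
    (fun ω => zero_le) hτn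
  have hint : Integrable (stoppedValue M τ) P := integrable_stoppedValue ℕ hτ hM.integrable hτn
  have hsub : {ω | ∃ k ≤ n, c ≤ M k ω} ⊆ {ω | c ≤ stoppedValue M τ ω} := fun ω ⟨k, hk, hck⟩ =>
    stoppedValue_hittingBtwn_mem (s := Set.Ici c) ⟨k, ⟨Nat.zero_le k, hk⟩, hck⟩
  calc c * P.real {ω | ∃ k ≤ n, c ≤ M k ω} ≤ c * P.real {ω | c ≤ stoppedValue M τ ω} := by
        gcongr
        exact measure_ne_top _ _
    _ ≤ ∫ ω, stoppedValue M τ ω ∂P :=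
        mul_meas_ge_le_integral_of_nonneg (.of_forall fun ω => hM₀ _ ω) hint c
    _ ≤ ∫ ω, M 0 ω ∂P := neg_le_neg_iff.1 (by simpa [stoppedValue, integral_neg] using hmono)

theorem ville_inequality (hM : Supermartingale M 𝒢 P) (hM₀ : ∀ n ω, 0 ≤ M n ω) (hc : 0 < c) :
    P {ω | ∃ n, c ≤ M n ω} ≤ ENNReal.ofReal ((∫ ω, M 0 ω ∂P) / c) := by
  have hunion : {ω | ∃ n, c ≤ M n ω} = ⋃ n, {ω | ∃ k ≤ n, c ≤ M k ω} := by
    ext ω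
    simp only [Set.mem_ofPred_eq, Set.mem_iUnion]
    exact ⟨fun ⟨n, hn⟩ => ⟨n, n, le_rfl, hn⟩, fun ⟨_, k, _, hk⟩ => ⟨k, hk⟩⟩
  have hmono : Monotone fun n => {ω | ∃ k ≤ n, c ≤ M k ω} :=
    fun _ _ hmn _ ⟨k, hk, hck⟩ => ⟨k, hk.trans hmn, hck⟩
  rw [hunion, hmono.measure_iUnion]
  refine iSup_le fun n => ?_
  rw [← ofReal_measureReal]
  refine ENNReal.ofReal_le_ofReal ((le_div_iff₀' hc).2 ?_)
  exact mul_measureReal_exists_ge_le hM hM₀ hc.le n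

end Ville

section CondExp

variable {B : Type*} [NormedAddCommGroup B] [NormedSpace ℝ B] {β : ℝ}
  {Ω : Type*} {m mΩ : MeasurableSpace Ω} {P : Measure Ω} {a b : ℝ} {S D : Ω → B}

theorem integrable_comp_norm_of_ae_norm_le [IsFiniteMeasure P] {E : Type*}
    [NormedAddCommGroup E] {f : Ω → E} {φ : ℝ → ℝ} (hφ : Continuous φ)
    (hf : AEStronglyMeasurable f P) (hfb : ∀ᵐ ω ∂P, ‖f ω‖ ≤ b) :
    Integrable (fun ω => φ ‖f ω‖) P := by
  obtain ⟨C, hC⟩ := isCompact_Icc.exists_bound_of_continuousOn (hφ.continuousOn (s := Set.Icc 0 b))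
  refine .of_bound (hφ.comp_aestronglyMeasurable hf.norm) C ?_
  filter_upwards [hfb] with ω hω using hC _ ⟨norm_nonneg _, hω⟩

theorem condExp_clm_apply_eq_zero [CompleteSpace B] {f : Ω → StrongDual ℝ B}
    (hf : StronglyMeasurable[m] f) (hfD : Integrable (fun ω => f ω (D ω)) P)
    (hDint : Integrable D P) (hD : P[D | m] =ᵐ[P] 0) : P[fun ω => f ω (D ω) | m] =ᵐ[P] 0 := by
  refine (condExp_bilin_of_stronglyMeasurable_left (.id ℝ (StrongDual ℝ B)) hf hfD hDint).trans ?_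
  filter_upwards [hD] with ω hω
  rw [hω, Pi.zero_apply, map_zero, Pi.zero_apply]

theorem TwoSmoothNorm.integrable_coshNormDeriv_apply [IsFiniteMeasure P] (h : TwoSmoothNorm B β)
    (hS : StronglyMeasurable S) (hSa : ∀ᵐ ω ∂P, ‖S ω‖ ≤ a)
    (hD : AEStronglyMeasurable D P) (hDb : ∀ᵐ ω ∂P, ‖D ω‖ ≤ b) :
    Integrable (fun ω => coshNormDeriv (S ω) (D ω)) P := by
  refine .mono' ((integrable_comp_norm_of_ae_norm_le Real.continuous_sinh
    hS.aestronglyMeasurable hSa).mul_const b)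
    ((ContinuousLinearMap.id ℝ (StrongDual ℝ B)).aestronglyMeasurable_comp₂
      (h.stronglyMeasurable_coshNormDeriv_comp hS).aestronglyMeasurable hD) ?_
  filter_upwards [hDb] with ω hω
  exact (coshNormDeriv (S ω)).le_of_opNorm_le_of_le (norm_coshNormDeriv_le _) hω

theorem TwoSmoothNorm.condExp_cosh_norm_add_le [CompleteSpace B] [IsFiniteMeasure P]
    (h : TwoSmoothNorm B β) (hm : m ≤ mΩ) (hS : StronglyMeasurable[m] S)
    (hSa : ∀ᵐ ω ∂P, ‖S ω‖ ≤ a) (hDm : AEStronglyMeasurable D P) (hDb : ∀ᵐ ω ∂P, ‖D ω‖ ≤ b)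
    (hD : P[D | m] =ᵐ[P] 0) :
    P[fun ω => Real.cosh ‖S ω + D ω‖ | m] ≤ᵐ[P] fun ω => Real.cosh ‖S ω‖ *
      (P[fun ω => 1 + β ^ 2 * (Real.exp ‖D ω‖ - 1 - ‖D ω‖) | m]) ω := by
  have hSm := (hS.mono hm).aestronglyMeasurable (μ := P)
  have hSDb : ∀ᵐ ω ∂P, ‖S ω + D ω‖ ≤ a + b := by
    filter_upwards [hSa, hDb] with ω hSω hDω using norm_add_le_of_le hSω hDω
  set T : Ω → ℝ := fun ω => coshNormDeriv (S ω) (D ω)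
  set C : Ω → ℝ := fun ω => Real.cosh ‖S ω‖
  set E : Ω → ℝ := fun ω => β ^ 2 * (Real.exp ‖D ω‖ - 1 - ‖D ω‖)
  have hT : Integrable T P := h.integrable_coshNormDeriv_apply (hS.mono hm) hSa hDm hDb
  have hC : Integrable C P := integrable_comp_norm_of_ae_norm_le Real.continuous_cosh hSm hSa
  have hE : Integrable (fun ω => 1 + E ω) P := integrable_comp_norm_of_ae_norm_le
    (φ := fun t => 1 + β ^ 2 * (Real.exp t - 1 - t)) (by fun_prop) hDm hDb
  have hCE : Integrable (C * fun ω => 1 + E ω) P := by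
    refine hE.bdd_mul (c := Real.cosh a) hC.aestronglyMeasurable ?_
    filter_upwards [hSa] with ω hω
    rw [Real.norm_of_nonneg (Real.cosh_pos _).le]
    exact Real.cosh_le_cosh.2 (abs_le_abs_of_nonneg (norm_nonneg _) hω)
  have hT₀ : P[T | m] =ᵐ[P] 0 :=
    condExp_clm_apply_eq_zero (h.stronglyMeasurable_coshNormDeriv_comp hS) hT
      (.of_bound hDm b hDb) hD
  have hpull : P[C * fun ω => 1 + E ω | m] =ᵐ[P] C * P[fun ω => 1 + E ω | m] :=
    condExp_mul_of_stronglyMeasurable_left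
      (Real.continuous_cosh.comp_stronglyMeasurable hS.norm) hCE hE
  have hmono : P[fun ω => Real.cosh ‖S ω + D ω‖ | m] ≤ᵐ[P] P[T + C * fun ω => 1 + E ω | m] := by
    refine condExp_mono (integrable_comp_norm_of_ae_norm_le Real.continuous_cosh (hSm.add hDm) hSDb)
      (hT.add hCE) (.of_forall fun ω => (h.cosh_norm_add_le (S ω) (D ω)).trans_eq ?_)
    simp only [T, C, E, Pi.add_apply, Pi.mul_apply]
    ring
  filter_upwards [hmono, condExp_add hT hCE m, hT₀, hpull] with ω hmono hadd hT₀ hpull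
  rw [hadd, Pi.add_apply, hT₀, hpull] at hmono
  simpa using hmono

theorem TwoSmoothNorm.condExp_cosh_norm_add_le_exp_mul [CompleteSpace B] [IsFiniteMeasure P]
    (h : TwoSmoothNorm B β) (hm : m ≤ mΩ) (hS : StronglyMeasurable[m] S)
    (hSa : ∀ᵐ ω ∂P, ‖S ω‖ ≤ a) (hDm : AEStronglyMeasurable D P) (hDb : ∀ᵐ ω ∂P, ‖D ω‖ ≤ b)
    (hD : P[D | m] =ᵐ[P] 0) {κ : ℝ}
    (hκ : P[fun ω => Real.exp ‖D ω‖ - 1 - ‖D ω‖ | m] ≤ᵐ[P] fun _ => κ) :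
    P[fun ω => Real.cosh ‖S ω + D ω‖ | m] ≤ᵐ[P]
      fun ω => Real.exp (β ^ 2 * κ) * Real.cosh ‖S ω‖ := by
  set E : Ω → ℝ := fun ω => Real.exp ‖D ω‖ - 1 - ‖D ω‖
  have hE : Integrable E P :=
    integrable_comp_norm_of_ae_norm_le (φ := fun t => Real.exp t - 1 - t) (by fun_prop) hDm hDb
  filter_upwards [h.condExp_cosh_norm_add_le hm hS hSa hDm hDb hD, hκ,
    condExp_add (integrable_const 1) (hE.const_mul (β ^ 2)) m, condExp_smul (β ^ 2) E m]
    with ω hstep hκ hadd hsmul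
  calc _ ≤ Real.cosh ‖S ω‖ * (P[fun ω => 1 + β ^ 2 * E ω | m]) ω := hstep
    _ = Real.cosh ‖S ω‖ * (1 + β ^ 2 * (P[E | m]) ω) := by
        congr 1
        refine hadd.trans ?_
        rw [Pi.add_apply, condExp_const hm]
        exact congrArg _ hsmul
    _ ≤ Real.cosh ‖S ω‖ * Real.exp (β ^ 2 * κ) := by
        gcongr
        have := mul_le_mul_of_nonneg_left hκ (sq_nonneg β)
        linarith [Real.add_one_le_exp (β ^ 2 * κ)]
    _ = Real.exp (β ^ 2 * κ) * Real.cosh ‖S ω‖ := mul_comm _ _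

end CondExp

section Supermartingale

variable {B : Type*} [NormedAddCommGroup B] [NormedSpace ℝ B] [CompleteSpace B] {β b : ℝ}
  {Ω : Type*} {mΩ : MeasurableSpace Ω} {P : Measure Ω} {𝒢 : Filtration ℕ mΩ} {D : ℕ → Ω → B} {κ : ℝ}

theorem TwoSmoothNorm.supermartingale_exp_mul_cosh_norm_sum [IsFiniteMeasure P]
    (h : TwoSmoothNorm B β) (hDm : ∀ n, StronglyMeasurable[𝒢 (n + 1)] (D n))
    (hDb : ∀ n, ∀ᵐ ω ∂P, ‖D n ω‖ ≤ b) (hD : ∀ n, P[D n | 𝒢 n] =ᵐ[P] 0)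
    (hκ : ∀ n, P[fun ω => Real.exp ‖D n ω‖ - 1 - ‖D n ω‖ | 𝒢 n] ≤ᵐ[P] fun _ => κ) :
    Supermartingale
      (fun (n : ℕ) ω =>
        Real.exp (-(n * (β ^ 2 * κ))) * Real.cosh ‖∑ k ∈ Finset.range n, D k ω‖) 𝒢 P := by
  set S : ℕ → Ω → B := fun n ω => ∑ k ∈ Finset.range n, D k ω
  have hSm : ∀ n, StronglyMeasurable[𝒢 n] (S n) := fun n =>
    Finset.stronglyMeasurable_fun_sum _ fun k hk =>
      (hDm k).mono (𝒢.mono (Finset.mem_range.1 hk))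
  have hSb : ∀ n, ∀ᵐ ω ∂P, ‖S n ω‖ ≤ n * b := fun n => by
    filter_upwards [ae_all_iff.2 hDb] with ω hω
    simpa using norm_sum_le_of_le (Finset.range n) fun k _ => hω k
  refine supermartingale_nat (fun n => ?_) (fun n => ?_) fun n => ?_
  · exact (Real.continuous_cosh.comp_stronglyMeasurable (hSm n).norm).const_mul _
  · exact (integrable_comp_norm_of_ae_norm_le Real.continuous_cosh
      ((hSm n).mono (𝒢.le n)).aestronglyMeasurable (hSb n)).const_mul _
  have hstep := h.condExp_cosh_norm_add_le_exp_mul (𝒢.le n) (hSm n) (hSb n)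
    ((hDm n).mono (𝒢.le _)).aestronglyMeasurable (hDb n) (hD n) (hκ n)
  filter_upwards [hstep, condExp_smul (Real.exp (-((n + 1 : ℕ) * (β ^ 2 * κ))))
    (fun ω => Real.cosh ‖S (n + 1) ω‖) (𝒢 n)] with ω hstep hsmul
  have hsucc : ∀ ω, S (n + 1) ω = S n ω + D n ω := fun ω => Finset.sum_range_succ _ _
  calc _ = _ := hsmul
    _ ≤ Real.exp (-((n + 1 : ℕ) * (β ^ 2 * κ))) * (Real.exp (β ^ 2 * κ) * Real.cosh ‖S n ω‖) := by
        simp only [hsucc]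
        exact mul_le_mul_of_nonneg_left hstep (Real.exp_pos _).le
    _ = Real.exp (-(n * (β ^ 2 * κ))) * Real.cosh ‖S n ω‖ := by
        rw [← mul_assoc, ← Real.exp_add]
        push_cast
        ring_nf

theorem TwoSmoothNorm.measure_exists_le_norm_sum_le [IsProbabilityMeasure P]
    (h : TwoSmoothNorm B β) (hDm : ∀ n, StronglyMeasurable[𝒢 (n + 1)] (D n))
    (hDb : ∀ n, ∀ᵐ ω ∂P, ‖D n ω‖ ≤ b) (hD : ∀ n, P[D n | 𝒢 n] =ᵐ[P] 0)
    (hκ : ∀ n, P[fun ω => Real.exp ‖D n ω‖ - 1 - ‖D n ω‖ | 𝒢 n] ≤ᵐ[P] fun _ => κ)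
    {δ : ℝ} (hδ : 0 < δ) :
    P {ω | ∃ n : ℕ, n * (β ^ 2 * κ) + Real.log (2 / δ) ≤ ‖∑ k ∈ Finset.range n, D k ω‖} ≤
      ENNReal.ofReal δ := by
  have hville := ville_inequality (h.supermartingale_exp_mul_cosh_norm_sum hDm hDb hD hκ)
    (fun n ω => (mul_pos (Real.exp_pos _) (Real.cosh_pos _)).le) (inv_pos.2 hδ)
  simp only [Nat.cast_zero, zero_mul, neg_zero, Real.exp_zero, Finset.sum_range_zero, norm_zero,
    Real.cosh_zero, mul_one, integral_const, smul_eq_mul, probReal_univ, one_div, inv_inv] at hville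
  refine (measure_mono ?_).trans hville
  rintro ω ⟨n, hn⟩
  refine ⟨n, ?_⟩
  set c := n * (β ^ 2 * κ)
  set s := ‖∑ k ∈ Finset.range n, D k ω‖
  calc δ⁻¹ = Real.exp (-c) * (Real.exp (c + Real.log (2 / δ)) / 2) := by
        rw [mul_div_assoc', ← Real.exp_add, neg_add_cancel_left, Real.exp_log (by positivity)]
        field_simp
    _ ≤ Real.exp (-c) * (Real.exp s / 2) := by gcongr
    _ ≤ Real.exp (-c) * Real.cosh s := by
        gcongr
        rw [Real.cosh_eq]
        linarith [Real.exp_pos (-s)]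

end Supermartingale

/-! ### Truncation -/

section Truncation

variable {B : Type*} [NormedAddCommGroup B] [NormedSpace ℝ B]

/-- The radial projection `Trunc(x) x` onto the closed unit ball. -/
noncomputable def ballProj (x : B) : B := truncB x • x

theorem ballProj_eq_inv_max_smul (x : B) : ballProj x = (max 1 ‖x‖)⁻¹ • x := by
  rcases eq_or_ne x 0 with rfl | hx
  · simp [ballProj]
  have hnorm := norm_pos_iff.2 hx
  rw [ballProj, truncB, if_neg hx]
  rcases le_total 1 ‖x‖ with h | h
  · rw [min_eq_left h, max_eq_right h, one_div]
  · rw [min_eq_right h, max_eq_left h, div_self hnorm.ne', inv_one]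

theorem norm_ballProj (x : B) : ‖ballProj x‖ = ‖x‖ / max 1 ‖x‖ := by
  rw [ballProj_eq_inv_max_smul, norm_smul, norm_inv, Real.norm_of_nonneg (by positivity),
    inv_mul_eq_div]

theorem norm_ballProj_le_one (x : B) : ‖ballProj x‖ ≤ 1 :=
  (norm_ballProj x).trans_le (div_le_one_of_le₀ (le_max_right _ _) (by positivity))

theorem norm_ballProj_le (x : B) : ‖ballProj x‖ ≤ ‖x‖ :=
  (norm_ballProj x).trans_le (div_le_self (norm_nonneg x) (le_max_left _ _))

theorem continuous_ballProj : Continuous (ballProj : B → B) := by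
  simp only [funext ballProj_eq_inv_max_smul]
  exact ((continuous_const.max continuous_norm).inv₀ fun x => by positivity).smul continuous_id

theorem norm_ballProj_sub_self_le {p : ℝ} (hp : 1 ≤ p) (x : B) :
    ‖ballProj x - x‖ ≤ Kp p * ‖x‖ ^ p := by
  rw [ballProj_eq_inv_max_smul]
  rcases le_total ‖x‖ 1 with h | h
  · rw [max_eq_left h, inv_one, one_smul, sub_self, norm_zero]
    exact mul_nonneg (Kp_nonneg hp) (by positivity)
  have hx : ‖x‖ ≠ 0 := (one_pos.trans_le h).ne'
  calc ‖(max 1 ‖x‖)⁻¹ • x - x‖ = ‖‖x‖⁻¹ - 1‖ * ‖x‖ := by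
        rw [max_eq_right h, ← norm_smul, sub_smul, one_smul]
    _ = ‖x‖ - 1 := by
        rw [Real.norm_of_nonpos (sub_nonpos.2 (inv_le_one_of_one_le₀ h))]
        field_simp
        ring
    _ ≤ Kp p * ‖x‖ ^ p := sub_one_le_Kp_mul_rpow hp (norm_nonneg x)

theorem exp_norm_smul_sub_le {p ρ : ℝ} (hp₁ : 1 ≤ p) (hp₂ : p ≤ 2) (hρ : 0 ≤ ρ) {x y : B}
    (hx : ‖x‖ ≤ 1) (hy : ‖y‖ ≤ 1) :
    Real.exp ‖ρ • (x - y)‖ - 1 - ‖ρ • (x - y)‖ ≤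
      (Real.exp (2 * ρ) - 1 - 2 * ρ) / 2 * (‖x‖ ^ p + ‖y‖ ^ p) := by
  set s := ‖x - y‖ / 2 with hs
  have hs₀ : 0 ≤ s := by positivity
  have hsub : ‖x - y‖ ≤ ‖x‖ + ‖y‖ := norm_sub_le x y
  have hnorm : ‖ρ • (x - y)‖ = s * (2 * ρ) := by
    rw [norm_smul, Real.norm_of_nonneg hρ, hs]
    ring
  have hspow : s ^ p ≤ (‖x‖ ^ p + ‖y‖ ^ p) / 2 := by
    have h2 : (2 : ℝ) ^ p = 2 ^ (p - 1) * 2 := by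
      rw [← Real.rpow_add_one two_ne_zero, sub_add_cancel]
    calc s ^ p ≤ (‖x‖ + ‖y‖) ^ p / 2 ^ p := by
          rw [hs, Real.div_rpow (norm_nonneg _) two_pos.le]
          gcongr
      _ ≤ 2 ^ (p - 1) * (‖x‖ ^ p + ‖y‖ ^ p) / 2 ^ p := by
          gcongr
          exact add_rpow_le_two_rpow_mul (norm_nonneg x) (norm_nonneg y) hp₁
      _ = (‖x‖ ^ p + ‖y‖ ^ p) / 2 := by rw [h2, mul_div_mul_left _ _ (by positivity)]
  have hexp : 0 ≤ Real.exp (2 * ρ) - 1 - 2 * ρ := by linarith [Real.add_one_le_exp (2 * ρ)]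
  calc Real.exp ‖ρ • (x - y)‖ - 1 - ‖ρ • (x - y)‖
      ≤ s ^ p * (Real.exp (2 * ρ) - 1 - 2 * ρ) := by
        rw [hnorm]
        exact exp_mul_sub_one_sub_le hs₀ (by linarith) (by positivity) (by linarith) hp₂
    _ ≤ (‖x‖ ^ p + ‖y‖ ^ p) / 2 * (Real.exp (2 * ρ) - 1 - 2 * ρ) := by gcongr
    _ = _ := by ring

theorem norm_average_truncB_smul_add_sub {lam : ℝ} (hlam : 0 < lam) {n : ℕ} (hn : n ≠ 0)
    (x : ℕ → B) (z μ : B) :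
    ‖(n : ℝ)⁻¹ • (∑ k ∈ Finset.range n, (truncB (lam • (x k - z)) • (x k - z) + z)) - μ‖ =
      ‖∑ k ∈ Finset.range n, (ballProj (lam • (x k - z)) - lam • (μ - z))‖ / (lam * n) := by
  have hterm : ∀ k, ballProj (lam • (x k - z)) - lam • (μ - z) =
      lam • (truncB (lam • (x k - z)) • (x k - z) + z - μ) := fun k => by
    rw [ballProj, smul_comm, ← smul_sub, add_sub_assoc, ← neg_sub μ z, ← sub_eq_add_neg]
  have hn' : (n : ℝ) ≠ 0 := Nat.cast_ne_zero.2 hn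
  have hmean : μ = (n : ℝ)⁻¹ • ∑ _k ∈ Finset.range n, μ := by
    rw [Finset.sum_const, Finset.card_range, ← Nat.cast_smul_eq_nsmul ℝ, inv_smul_smul₀ hn']
  conv_lhs => rw [hmean, ← smul_sub, ← Finset.sum_sub_distrib]
  simp only [hterm, ← Finset.smul_sum, norm_smul, Real.norm_of_nonneg hlam.le, norm_inv,
    Real.norm_natCast]
  rw [mul_div_mul_left _ _ hlam.ne', inv_mul_eq_div]

end Truncation

section TruncatedMean

variable {B : Type*} [NormedAddCommGroup B] [NormedSpace ℝ B] {Ω : Type*}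
  {m mΩ : MeasurableSpace Ω} {P : Measure Ω} {p : ℝ}

theorem memLp_ofReal_iff_integrable_norm_rpow {E : Type*} [NormedAddCommGroup E] {f : Ω → E}
    (hf : AEStronglyMeasurable f P) (hp : 0 < p) :
    MemLp f (ENNReal.ofReal p) P ↔ Integrable (fun ω => ‖f ω‖ ^ p) P := by
  rw [← integrable_norm_rpow_iff hf (ENNReal.ofReal_pos.2 hp).ne' ENNReal.ofReal_ne_top,
    ENNReal.toReal_ofReal hp.le]

theorem condExp_le_mul_condExp_of_le {f g : Ω → ℝ} {c : ℝ} (hf : Integrable f P)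
    (hg : Integrable g P) (hfg : ∀ᵐ ω ∂P, f ω ≤ c * g ω) :
    ∀ᵐ ω ∂P, (P[f | m]) ω ≤ c * (P[g | m]) ω := by
  filter_upwards [condExp_mono (m := m) hf (hg.const_mul c) hfg, condExp_smul c g m]
    with ω hmono hsmul using hmono.trans_eq hsmul

theorem condExp_norm_smul_sub_rpow_le [IsFiniteMeasure P] (hm : m ≤ mΩ) (hp : 1 ≤ p)
    {lam v R : ℝ} (hlam : 0 ≤ lam) {X Z : Ω → B} {μ : B} (hX : MemLp X (ENNReal.ofReal p) P)
    (hv : ∀ᵐ ω ∂P, (P[fun ω => ‖X ω - μ‖ ^ p | m]) ω ≤ v)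
    (hZ : MemLp Z (ENNReal.ofReal p) P) (hZR : ∀ ω, ‖μ - Z ω‖ ≤ R) :
    ∀ᵐ ω ∂P, (P[fun ω => ‖lam • (X ω - Z ω)‖ ^ p | m]) ω ≤
      lam ^ p * 2 ^ (p - 1) * (v + R ^ p) := by
  have hp₀ : 0 < p := one_pos.trans_le hp
  have hW : MemLp (fun ω => lam • (X ω - Z ω)) (ENNReal.ofReal p) P := (hX.sub hZ).const_smul lam
  have hXμ : MemLp (fun ω => X ω - μ) (ENNReal.ofReal p) P := hX.sub (memLp_const μ)
  rw [memLp_ofReal_iff_integrable_norm_rpow hW.aestronglyMeasurable hp₀] at hW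
  rw [memLp_ofReal_iff_integrable_norm_rpow hXμ.aestronglyMeasurable hp₀] at hXμ
  have hsplit : ∀ ω, ‖lam • (X ω - Z ω)‖ ^ p ≤
      lam ^ p * 2 ^ (p - 1) * (‖X ω - μ‖ ^ p + R ^ p) := fun ω => by
    have hR : 0 ≤ R := (norm_nonneg _).trans (hZR ω)
    rw [norm_smul, Real.norm_of_nonneg hlam, Real.mul_rpow hlam (norm_nonneg _), mul_assoc]
    gcongr
    calc ‖X ω - Z ω‖ ^ p ≤ (‖X ω - μ‖ + R) ^ p := by
          gcongr
          exact (norm_sub_le_norm_sub_add_norm_sub _ μ _).trans (by gcongr; exact hZR ω)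
      _ ≤ 2 ^ (p - 1) * (‖X ω - μ‖ ^ p + R ^ p) :=
          add_rpow_le_two_rpow_mul (norm_nonneg _) hR hp
  filter_upwards [condExp_le_mul_condExp_of_le (m := m) hW (hXμ.add (integrable_const (R ^ p)))
    (.of_forall hsplit), condExp_add hXμ (integrable_const (R ^ p)) m, hv] with ω hle hadd hv
  rw [hadd, Pi.add_apply, condExp_const hm] at hle
  refine hle.trans ?_
  gcongr

variable [CompleteSpace B]

theorem ae_norm_smul_sub_condExp_le {ρ b : ℝ} (hρ : 0 ≤ ρ) {Y : Ω → B}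
    (hY : ∀ᵐ ω ∂P, ‖Y ω‖ ≤ b) : ∀ᵐ ω ∂P, ‖ρ • (Y ω - (P[Y | m]) ω)‖ ≤ ρ * (b + b) := by
  filter_upwards [hY, ae_bdd_norm_condExp_of_ae_bdd_norm hY] with ω hY he
  rw [norm_smul, Real.norm_of_nonneg hρ]
  gcongr
  exact norm_sub_le_of_le hY he

theorem condExp_smul_sub_condExp_eq_zero [IsFiniteMeasure P] (hm : m ≤ mΩ) (c : ℝ) {Y : Ω → B}
    (hY : Integrable Y P) : P[fun ω => c • (Y ω - (P[Y | m]) ω) | m] =ᵐ[P] 0 := by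
  filter_upwards [condExp_smul c (Y - P[Y | m]) m, condExp_sub hY integrable_condExp m,
    condExp_condExp_of_le (f := Y) le_rfl hm] with ω hsmul hsub htower
  refine hsmul.trans ?_
  rw [Pi.smul_apply, hsub, Pi.sub_apply, htower, sub_self, smul_zero, Pi.zero_apply]

theorem condExp_exp_norm_smul_sub_condExp_le [IsFiniteMeasure P] (hm : m ≤ mΩ) (hp₁ : 1 ≤ p)
    (hp₂ : p ≤ 2) {ρ : ℝ} (hρ : 0 ≤ ρ) {Y : Ω → B} (hYm : AEStronglyMeasurable Y P)
    (hY : ∀ᵐ ω ∂P, ‖Y ω‖ ≤ 1) :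
    ∀ᵐ ω ∂P, (P[fun ω => Real.exp ‖ρ • (Y ω - (P[Y | m]) ω)‖ - 1
        - ‖ρ • (Y ω - (P[Y | m]) ω)‖ | m]) ω ≤
      (Real.exp (2 * ρ) - 1 - 2 * ρ) * (P[fun ω => ‖Y ω‖ ^ p | m]) ω := by
  set e : Ω → B := P[Y | m]
  set V : Ω → ℝ := fun ω => ‖Y ω‖ ^ p
  have he : ∀ᵐ ω ∂P, ‖e ω‖ ≤ 1 := ae_bdd_norm_condExp_of_ae_bdd_norm hY
  have hV : Integrable V P := integrable_comp_norm_of_ae_norm_le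
    (Real.continuous_rpow_const (zero_le_one.trans hp₁)) hYm hY
  have hint : Integrable (fun ω => Real.exp ‖ρ • (Y ω - e ω)‖ - 1 - ‖ρ • (Y ω - e ω)‖) P :=
    integrable_comp_norm_of_ae_norm_le (φ := fun t => Real.exp t - 1 - t) (by fun_prop)
      ((hYm.sub integrable_condExp.aestronglyMeasurable).const_smul ρ)
      (ae_norm_smul_sub_condExp_le hρ hY)
  have hjensen : ∀ᵐ ω ∂P, Real.exp ‖ρ • (Y ω - e ω)‖ - 1 - ‖ρ • (Y ω - e ω)‖ ≤
      (Real.exp (2 * ρ) - 1 - 2 * ρ) / 2 * (V + P[V | m]) ω := by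
    filter_upwards [hY, he, Integrable.norm_condExp_rpow_le (m := m) hp₁ hV] with ω hY he hjensen
    refine (exp_norm_smul_sub_le hp₁ hp₂ hρ hY he).trans ?_
    have : 0 ≤ Real.exp (2 * ρ) - 1 - 2 * ρ := by linarith [Real.add_one_le_exp (2 * ρ)]
    rw [Pi.add_apply]
    gcongr
  filter_upwards [condExp_le_mul_condExp_of_le (m := m) hint (hV.add integrable_condExp) hjensen,
    condExp_add hV integrable_condExp m, condExp_condExp_of_le (f := V) le_rfl hm]
    with ω hle hadd htower
  rw [hadd, Pi.add_apply, htower] at hle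
  linarith

theorem norm_condExp_ballProj_sub_condExp_le (hp : 1 ≤ p) {W : Ω → B} (hW : Integrable W P)
    (hWp : Integrable (fun ω => ‖W ω‖ ^ p) P) :
    ∀ᵐ ω ∂P, ‖(P[fun ω => ballProj (W ω) | m]) ω - (P[W | m]) ω‖ ≤
      Kp p * (P[fun ω => ‖W ω‖ ^ p | m]) ω := by
  have hproj : Integrable (fun ω => ballProj (W ω)) P :=
    hW.mono (continuous_ballProj.comp_aestronglyMeasurable hW.aestronglyMeasurable)
      (.of_forall fun ω => norm_ballProj_le (W ω))
  filter_upwards [condExp_sub hproj hW m, norm_condExp_le (m := m) ((fun ω => ballProj (W ω)) - W),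
    condExp_le_mul_condExp_of_le (m := m) (hproj.sub hW).norm hWp
      (.of_forall fun ω => norm_ballProj_sub_self_le hp (W ω))] with ω hsub hnorm hle
  rw [hsub] at hnorm
  exact hnorm.trans hle

variable [IsProbabilityMeasure P] {β ρ δ : ℝ} {𝒢 : Filtration ℕ mΩ}

theorem TwoSmoothNorm.measure_exists_le_norm_sum_sub_condExp_le (h : TwoSmoothNorm B β)
    (hp₁ : 1 ≤ p) (hp₂ : p ≤ 2) (hρ : 0 < ρ) (hδ : 0 < δ) {Y : ℕ → Ω → B} {w : ℝ}
    (hYm : ∀ n, StronglyMeasurable[𝒢 (n + 1)] (Y n)) (hY : ∀ n ω, ‖Y n ω‖ ≤ 1)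
    (hw : ∀ n, ∀ᵐ ω ∂P, (P[fun ω => ‖Y n ω‖ ^ p | 𝒢 n]) ω ≤ w) :
    P {ω | ∃ n : ℕ, n * (β ^ 2 * ((Real.exp (2 * ρ) - 1 - 2 * ρ) / ρ) * w)
        + Real.log (2 / δ) / ρ ≤
      ‖∑ k ∈ Finset.range n, (Y k ω - (P[Y k | 𝒢 k]) ω)‖} ≤ ENNReal.ofReal δ := by
  have hYm' : ∀ n, AEStronglyMeasurable (Y n) P := fun n =>
    ((hYm n).mono (𝒢.le _)).aestronglyMeasurable
  have hYint : ∀ n, Integrable (Y n) P := fun n => .of_bound (hYm' n) 1 (.of_forall (hY n))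
  set D : ℕ → Ω → B := fun n ω => ρ • (Y n ω - (P[Y n | 𝒢 n]) ω)
  have hDm : ∀ n, StronglyMeasurable[𝒢 (n + 1)] (D n) := fun n =>
    ((hYm n).sub (stronglyMeasurable_condExp.mono (𝒢.mono n.le_succ))).const_smul ρ
  have hκ : ∀ n, P[fun ω => Real.exp ‖D n ω‖ - 1 - ‖D n ω‖ | 𝒢 n] ≤ᵐ[P]
      fun _ => (Real.exp (2 * ρ) - 1 - 2 * ρ) * w := fun n => by
    filter_upwards [condExp_exp_norm_smul_sub_condExp_le (𝒢.le n) hp₁ hp₂ hρ.le (hYm' n)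
      (.of_forall (hY n)), hw n] with ω hle hw
    exact hle.trans (mul_le_mul_of_nonneg_left hw (by linarith [Real.add_one_le_exp (2 * ρ)]))
  refine (measure_mono ?_).trans (h.measure_exists_le_norm_sum_le hDm
    (fun n => ae_norm_smul_sub_condExp_le hρ.le (.of_forall (hY n)))
    (fun n => condExp_smul_sub_condExp_eq_zero (𝒢.le n) ρ (hYint n)) hκ hδ)
  rintro ω ⟨n, hn⟩
  refine ⟨n, ?_⟩
  simp only [D, ← Finset.smul_sum, norm_smul, Real.norm_of_nonneg hρ.le]
  refine le_trans (le_of_eq ?_) (mul_le_mul_of_nonneg_left hn hρ.le)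
  field_simp

theorem TwoSmoothNorm.measure_exists_lt_norm_sum_ballProj_sub_condExp_le (h : TwoSmoothNorm B β)
    (hp₁ : 1 ≤ p) (hp₂ : p ≤ 2) (hρ : 0 < ρ) (hδ : 0 < δ) {W : ℕ → Ω → B} {w : ℝ}
    (hWm : ∀ n, StronglyMeasurable[𝒢 (n + 1)] (W n)) (hW : ∀ n, MemLp (W n) (ENNReal.ofReal p) P)
    (hw : ∀ n, ∀ᵐ ω ∂P, (P[fun ω => ‖W n ω‖ ^ p | 𝒢 n]) ω ≤ w) :
    P {ω | ∃ n : ℕ, n * ((β ^ 2 * ((Real.exp (2 * ρ) - 1 - 2 * ρ) / ρ) + Kp p) * w)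
        + Real.log (2 / δ) / ρ <
      ‖∑ k ∈ Finset.range n, (ballProj (W k ω) - (P[W k | 𝒢 k]) ω)‖} ≤ ENNReal.ofReal δ := by
  have hWp : ∀ n, Integrable (fun ω => ‖W n ω‖ ^ p) P := fun n =>
    (memLp_ofReal_iff_integrable_norm_rpow (hW n).1 (one_pos.trans_le hp₁)).1 (hW n)
  set Y : ℕ → Ω → B := fun n ω => ballProj (W n ω)
  have hYm : ∀ n, StronglyMeasurable[𝒢 (n + 1)] (Y n) := fun n =>
    continuous_ballProj.comp_stronglyMeasurable (hWm n)
  have hYw : ∀ n, ∀ᵐ ω ∂P, (P[fun ω => ‖Y n ω‖ ^ p | 𝒢 n]) ω ≤ w := fun n => by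
    have hYp : Integrable (fun ω => ‖Y n ω‖ ^ p) P := integrable_comp_norm_of_ae_norm_le
      (Real.continuous_rpow_const (zero_le_one.trans hp₁))
      ((hYm n).mono (𝒢.le _)).aestronglyMeasurable
      (.of_forall fun ω => norm_ballProj_le_one (W n ω))
    filter_upwards [condExp_mono (m := 𝒢 n) hYp (hWp n) (.of_forall fun ω =>
      Real.rpow_le_rpow (norm_nonneg _) (norm_ballProj_le (W n ω)) (by linarith)), hw n]
      with ω hmono hw using hmono.trans hw
  have hbias : ∀ n, ∀ᵐ ω ∂P, ‖(P[Y n | 𝒢 n]) ω - (P[W n | 𝒢 n]) ω‖ ≤ Kp p * w := fun n => by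
    filter_upwards [norm_condExp_ballProj_sub_condExp_le hp₁
      ((hW n).integrable (ENNReal.one_le_ofReal.2 hp₁)) (hWp n), hw n] with ω hle hw
    exact hle.trans (mul_le_mul_of_nonneg_left hw (Kp_nonneg hp₁))
  refine (measure_mono_ae ?_).trans (h.measure_exists_le_norm_sum_sub_condExp_le hp₁ hp₂ hρ hδ hYm
    (fun n ω => norm_ballProj_le_one (W n ω)) hYw)
  filter_upwards [ae_all_iff.2 hbias] with ω hbias
  rintro ⟨n, hn⟩
  refine ⟨n, ?_⟩
  have hsplit : ‖∑ k ∈ Finset.range n, (Y k ω - (P[W k | 𝒢 k]) ω)‖ ≤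
      ‖∑ k ∈ Finset.range n, (Y k ω - (P[Y k | 𝒢 k]) ω)‖ + n * (Kp p * w) := by
    have hsum := norm_sum_le_of_le (Finset.range n) fun k _ => hbias k
    rw [Finset.sum_const, Finset.card_range, nsmul_eq_mul] at hsum
    refine le_trans (le_of_eq ?_) (norm_add_le_of_le le_rfl hsum)
    rw [← Finset.sum_add_distrib]
    simp only [sub_add_sub_cancel]
  linarith

theorem TwoSmoothNorm.measure_exists_lt_norm_average_truncB_sub_le (h : TwoSmoothNorm B β)
    (hp₁ : 1 ≤ p) (hp₂ : p ≤ 2) (hρ : 0 < ρ) (hδ : 0 < δ) {X : ℕ → Ω → B} {μ : B} {v : ℝ}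
    (hXm : ∀ n, StronglyMeasurable[𝒢 (n + 1)] (X n)) (hX : ∀ n, MemLp (X n) (ENNReal.ofReal p) P)
    (hμ : ∀ n, P[X n | 𝒢 n] =ᵐ[P] fun _ => μ)
    (hv : ∀ n, ∀ᵐ ω ∂P, (P[fun ω => ‖X n ω - μ‖ ^ p | 𝒢 n]) ω ≤ v)
    {Z : Ω → B} (hZm : StronglyMeasurable[𝒢 0] Z) {R : ℝ} (hZ : ∀ ω, ‖μ - Z ω‖ ≤ R)
    {lam : ℝ} (hlam : 0 < lam) :
    P {ω | ∃ n : ℕ, 1 ≤ n ∧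
      lam ^ (p - 1) * (ρ * β ^ 2 * frakC p ρ + Kp p * 2 ^ (p - 1)) * (v + R ^ p)
          + Real.log (2 / δ) / (lam * ρ * n) <
        ‖(n : ℝ)⁻¹ • (∑ k ∈ Finset.range n,
          (truncB (lam • (X k ω - Z ω)) • (X k ω - Z ω) + Z ω)) - μ‖} ≤ ENNReal.ofReal δ := by
  have hZn : ∀ n, StronglyMeasurable[𝒢 n] Z := fun n => hZm.mono (𝒢.mono n.zero_le)
  have hZL : MemLp Z (ENNReal.ofReal p) P := by
    refine .of_bound ((hZm.mono (𝒢.le 0)).aestronglyMeasurable) (‖μ‖ + R) (.of_forall fun ω => ?_)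
    exact (norm_le_norm_add_norm_sub _ _).trans (by gcongr; exact hZ ω)
  set W : ℕ → Ω → B := fun n => lam • (X n - Z)
  have hcond : ∀ n, P[W n | 𝒢 n] =ᵐ[P] fun ω => lam • (μ - Z ω) := fun n => by
    have hp : 1 ≤ ENNReal.ofReal p := ENNReal.one_le_ofReal.2 hp₁
    filter_upwards [condExp_smul lam (X n - Z) (𝒢 n),
      condExp_sub ((hX n).integrable hp) (hZL.integrable hp) (𝒢 n), hμ n] with ω hsmul hsub hμ
    rw [hsmul, Pi.smul_apply, hsub, Pi.sub_apply, hμ,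
      condExp_of_stronglyMeasurable (𝒢.le n) (hZn n) (hZL.integrable hp)]
  refine (measure_mono_ae ?_).trans (h.measure_exists_lt_norm_sum_ballProj_sub_condExp_le
    hp₁ hp₂ hρ hδ (W := W)
    (fun n => ((hXm n).sub (hZn (n + 1))).const_smul lam)
    (fun n => ((hX n).sub hZL).const_smul lam)
    (fun n => condExp_norm_smul_sub_rpow_le (𝒢.le n) hp₁ hlam.le (hX n) (hv n) hZL hZ))
  filter_upwards [ae_all_iff.2 hcond] with ω hcond
  rintro ⟨n, hn, hlt⟩
  refine ⟨n, ?_⟩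
  have hn₀ : (0 : ℝ) < n := Nat.cast_pos.2 hn
  rw [norm_average_truncB_smul_add_sub hlam (Nat.ne_of_gt hn) (fun k => X k ω),
    lt_div_iff₀ (by positivity)] at hlt
  change _ < ‖∑ k ∈ Finset.range n, (ballProj (lam • (X k ω - Z ω)) - (P[W k | 𝒢 k]) ω)‖
  simp only [hcond]
  refine lt_of_eq_of_lt ?_ hlt
  have hlamp : lam ^ p = lam ^ (p - 1) * lam := by
    rw [← Real.rpow_add_one hlam.ne', sub_add_cancel]
  rw [mul_right_comm ρ, mul_frakC hρ.ne', hlamp]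
  field_simp

end TruncatedMean

theorem stmt11_general
    {B : Type*} [NormedAddCommGroup B] [NormedSpace ℝ B] [CompleteSpace B]
    {Ω : Type*} {mΩ : MeasurableSpace Ω} {P : Measure Ω} [IsProbabilityMeasure P]
    {β : ℝ} (hsmooth : TwoSmoothNorm B β)
    (𝒢 : Filtration ℕ mΩ) (X : ℕ → Ω → B) {μ : B} {p v : ℝ} (hp₁ : 1 ≤ p) (hp₂ : p ≤ 2)
    (hadapted : ∀ n : ℕ, 1 ≤ n → StronglyMeasurable[𝒢 n] (X n))
    (hmom : ∀ n : ℕ, 1 ≤ n → Integrable (fun ω => ‖X n ω‖ ^ p) P)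
    (hcondmean : ∀ n : ℕ, P[X (n + 1) | 𝒢 n] =ᵐ[P] fun _ => μ)
    (hcondmom : ∀ n : ℕ, ∀ᵐ ω ∂P, (P[fun ω' => ‖X (n + 1) ω' - μ‖ ^ p | 𝒢 n]) ω ≤ v)
    {Z : Ω → B} (hZ : StronglyMeasurable[𝒢 0] Z) {R : ℝ} (hR : 0 ≤ R) {δ₁ δ₂ : ℝ}
    (hZR : P {ω | R ≤ ‖μ - Z ω‖} ≤ ENNReal.ofReal δ₂) (hδ₁ : 0 < δ₁) (hδ₂ : 0 ≤ δ₂)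
    {ρ lam : ℝ} (hρ : 0 < ρ) (hlam : 0 < lam) :
    ENNReal.ofReal (1 - δ₁ - δ₂) ≤
      P {ω | ∀ n : ℕ, 1 ≤ n →
        ‖(n : ℝ)⁻¹ • (∑ m ∈ Finset.range n,
            (truncB (lam • (X (m + 1) ω - Z ω)) • (X (m + 1) ω - Z ω) + Z ω)) - μ‖ ≤
          lam ^ (p - 1) * (ρ * β ^ 2 * frakC p ρ + Kp p * 2 ^ (p - 1)) * (v + R ^ p)
            + Real.log (2 / δ₁) / (lam * ρ * n)} := by
  set Z' : Ω → B := fun ω => if ‖μ - Z ω‖ < R then Z ω else μ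
  have hZ' : StronglyMeasurable[𝒢 0] Z' :=
    .ite ((stronglyMeasurable_const.sub hZ).norm.measurable measurableSet_Iio) hZ
      stronglyMeasurable_const
  have hZ'R : ∀ ω, ‖μ - Z' ω‖ ≤ R := fun ω => by
    by_cases hω : ‖μ - Z ω‖ < R
    · simpa only [Z', if_pos hω] using hω.le
    · simpa only [Z', if_neg hω, sub_self, norm_zero] using hR
  have hcross := hsmooth.measure_exists_lt_norm_average_truncB_sub_le hp₁ hp₂ hρ hδ₁
    (X := fun n => X (n + 1)) (fun n => hadapted _ n.succ_pos)
    (fun n => (memLp_ofReal_iff_integrable_norm_rpow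
      ((hadapted _ n.succ_pos).mono (𝒢.le _)).aestronglyMeasurable (one_pos.trans_le hp₁)).2
      (hmom _ n.succ_pos)) hcondmean hcondmom hZ' hZ'R hlam
  rw [sub_sub, ENNReal.ofReal_sub _ (by positivity), ENNReal.ofReal_one,
    ENNReal.ofReal_add hδ₁.le hδ₂, tsub_le_iff_right, ← measure_univ (μ := P)]
  refine le_trans (measure_mono fun ω _ => ?_) ((measure_union_le _ _).trans
    (add_le_add_right ((measure_union_le _ _).trans (add_le_add hcross hZR)) _))
  by_cases hω : R ≤ ‖μ - Z ω‖
  · exact .inr (.inr hω)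
  have hZω : Z' ω = Z ω := if_pos (not_le.1 hω)
  refine or_iff_not_imp_left.2 fun hbad => .inl ?_
  simpa only [Set.mem_ofPred_eq, not_forall, not_le, exists_prop, hZω] using hbad

/-- **Time-uniform line-crossing template (Proposition).** Given a tail bound `r` for a
`𝒢₀`-measurable centering `Ẑ`, for any `ρ, λ > 0` and `δ₁ + δ₂ ≤ 1`, with probability at
least `1 - δ₁ - δ₂`, simultaneously for all `n ≥ 1`,
`‖μ̂ₙ - μ‖ ≤ λ^{p-1}(ρβ²𝔠_p(ρ) + K_p2^{p-1})(v + r(δ₂)^p) + log(2/δ₁)/(λρn)`. -/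
theorem stmt11
    {B : Type*} [NormedAddCommGroup B] [NormedSpace ℝ B] [CompleteSpace B]
    [TopologicalSpace.SeparableSpace B]
    {Ω : Type*} {mΩ : MeasurableSpace Ω} {P : Measure Ω} [IsProbabilityMeasure P]
    (β : ℝ) (hβ : 1 ≤ β)
    (hsmooth : ∀ x y : B, ‖x + y‖ ^ 2 + ‖x - y‖ ^ 2 ≤ 2 * ‖x‖ ^ 2 + 2 * β ^ 2 * ‖y‖ ^ 2)
    (𝒢 : Filtration ℕ mΩ) (X : ℕ → Ω → B) (μ : B) (p v : ℝ)
    (hp1 : 1 < p) (hp2 : p ≤ 2) (hv : 0 < v)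
    (hadapted : ∀ n : ℕ, 1 ≤ n → StronglyMeasurable[𝒢 n] (X n))
    (hint : ∀ n : ℕ, 1 ≤ n → Integrable (X n) P)
    (hmom : ∀ n : ℕ, 1 ≤ n → Integrable (fun ω => ‖X n ω‖ ^ p) P)
    (hcondmean : ∀ n : ℕ, P[X (n + 1) | 𝒢 n] =ᵐ[P] fun _ => μ)
    (hcondmom : ∀ n : ℕ, ∀ᵐ ω ∂P, (P[fun ω' => ‖X (n + 1) ω' - μ‖ ^ p | 𝒢 n]) ω ≤ v)
    (Z : Ω → B) (hZ : StronglyMeasurable[𝒢 0] Z)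
    (r : ℝ → ℝ) (hr_nonneg : ∀ x, 0 ≤ r x)
    (hr : ∀ δ' ∈ Set.Ioc (0 : ℝ) 1, P {ω | r δ' ≤ ‖μ - Z ω‖} ≤ ENNReal.ofReal δ')
    (δ₁ δ₂ : ℝ) (hδ₁ : δ₁ ∈ Set.Ioo (0 : ℝ) 1) (hδ₂ : δ₂ ∈ Set.Ioo (0 : ℝ) 1)
    (hδ : δ₁ + δ₂ ≤ 1)
    (ρ lam : ℝ) (hρ : 0 < ρ) (hlam : 0 < lam) :
    ENNReal.ofReal (1 - δ₁ - δ₂) ≤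
      P {ω | ∀ n : ℕ, 1 ≤ n →
        ‖(n : ℝ)⁻¹ • (∑ m ∈ Finset.range n,
            (truncB (lam • (X (m + 1) ω - Z ω)) • (X (m + 1) ω - Z ω) + Z ω)) - μ‖ ≤
          lam ^ (p - 1) * (ρ * β ^ 2 * frakC p ρ + Kp p * 2 ^ (p - 1)) * (v + r δ₂ ^ p)
            + Real.log (2 / δ₁) / (lam * ρ * n)} :=
  stmt11_general hsmooth 𝒢 X hp1.le hp2 hadapted hmom hcondmean hcondmom hZ (hr_nonneg δ₂)
    (hr δ₂ ⟨hδ₂.1, hδ₂.2.le⟩) hδ₁.1 hδ₂.1.le hρ hlam
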